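/- If S ⊆ Q is a compact weakly infinite dimensional subset of the Hilbert cube, then the complement Q \ S is path connected. -/

import Mathlib

open Set

/-- A separator between `A` and `B` in a topological space: a closed set `L` whose
complement is the union of two disjoint open sets containing `A` and `B` respectively. -/
def IsSeparator {X : Type*} [TopologicalSpace X] (A B L : Set X) : Prop :=
  IsClosed L ∧ ∃ U V : Set X, IsOpen U ∧ IsOpen V ∧ Disjoint U V ∧
    A ⊆ U ∧ B ⊆ V ∧ Lᶜ = U ∪ V

/-- A family of pairs of sets is essential if every choice of separators has
nonempty intersection. -/
def IsEssentialFamily {X : Type*} [TopologicalSpace X] {Γ : Type*}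
    (A B : Γ → Set X) : Prop :=
  ∀ L : Γ → Set X, (∀ i, IsSeparator (A i) (B i) (L i)) → (⋂ i, L i).Nonempty

/-- A space is strongly infinite dimensional if it admits a countably infinite
essential family of pairs of disjoint closed subsets. -/
def StronglyInfiniteDimensional (X : Type*) [TopologicalSpace X] : Prop :=
  ∃ A B : ℕ → Set X,
    (∀ n, IsClosed (A n) ∧ IsClosed (B n) ∧ Disjoint (A n) (B n)) ∧
    IsEssentialFamily A B

/-- The Hilbert cube `Q = [-1,1]^ℕ`. -/
abbrev HilbertCube : Type := ℕ → Set.Icc (-1 : ℝ) 1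

/-- The negative face `W_i^- = {x ∈ Q : x_i = -1}`. -/
def negFace (i : ℕ) : Set HilbertCube := {x | (x i : ℝ) = -1}

/-- The positive face `W_i^+ = {x ∈ Q : x_i = 1}`. -/
def posFace (i : ℕ) : Set HilbertCube := {x | (x i : ℝ) = 1}

/-!
Opposite faces of a cube form an essential family, in any number of dimensions. In finite dimension
this is the Poincaré–Miranda theorem, proved on a grid: label the vertices by functions `fᵢ` with
values `0` and `1` on the two faces of direction `i`. By the mod-two Stokes theorem the cup product
`δf₁ ⌣ ⋯ ⌣ δfₙ` sums to `1` over the grid, so some small cube sees both values of every `fᵢ`.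
Infinitely many dimensions follow by compactness.

Suppose that the open set `Q \ S` were disconnected. Then `S` separates two cylinders, each of which
constrains only the first `n` coordinates. As `S` is weakly infinite dimensional, the opposite faces
in the directions `n, n + 1, …` have separators in `S` with empty intersection, and these extend to
separators in `Q` whose intersection misses `S`. Joining the centres of the cylinders by a path maps
a cube to `Q` so that one pair of opposite faces goes to the cylinders and the other pairs go to the
faces of `Q` in the directions `n, n + 1, …`. Hence `S` and those separators have a common point, a
contradiction.
-/

/-- A cubical cochain on the lattice `ℕ^ι`: it assigns `ω J v` to the unit cube with least vertex
`v` and set of edge directions `J`. -/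
abbrev CubicalCochain (ι R : Type*) : Type _ := Finset ι → (ι → ℕ) → R

namespace CubicalCochain

section Cup

variable {ι R : Type*} [DecidableEq ι] [CommRing R]

/-- The cubical coboundary without its signs, hence a differential only in characteristic two. -/
def coboundary (ω : CubicalCochain ι R) : CubicalCochain ι R := fun J v =>
  ∑ j ∈ J, (ω (J.erase j) (v + Pi.single j 1) - ω (J.erase j) v)

/-- The cup product `δf₁ ⌣ δf₂ ⌣ ⋯ ⌣ δfₙ` of the coboundaries of functions on the lattice,
encoded as `δ(f₁ · (δf₂ ⌣ ⋯ ⌣ δfₙ))`. -/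
def cupCoboundaries : List ((ι → ℕ) → R) → CubicalCochain ι R
  | [] => fun J _ => if J = ∅ then 1 else 0
  | f :: fs => coboundary fun J v => f v * cupCoboundaries fs J v

theorem coboundary_mul (f : (ι → ℕ) → R) (ω : CubicalCochain ι R) (J : Finset ι) (v : ι → ℕ) :
    coboundary (fun J v => f v * ω J v) J v =
      ∑ j ∈ J, (f (v + Pi.single j 1) - f v) * ω (J.erase j) (v + Pi.single j 1)
        + f v * coboundary ω J v := by
  simp only [coboundary, Finset.mul_sum, ← Finset.sum_add_distrib]
  exact Finset.sum_congr rfl fun j _ => by ring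

variable [CharP R 2]

theorem sum_sum_erase_eq_zero_of_symm (J : Finset ι) {F : ι → ι → R} (hF : ∀ j k, F j k = F k j) :
    ∑ j ∈ J, ∑ k ∈ J.erase j, F j k = 0 := by
  rw [Finset.sum_sigma']
  refine Finset.sum_involution (fun p _ => ⟨p.2, p.1⟩) ?_ ?_ ?_ fun _ _ => rfl
  · rintro ⟨j, k⟩ -
    exact hF j k ▸ CharTwo.add_self_eq_zero _
  · rintro ⟨j, k⟩ hjk - heq
    simp_all
  · rintro ⟨j, k⟩ hjk
    simp_all [eq_comm]

theorem coboundary_coboundary (ω : CubicalCochain ι R) : coboundary (coboundary ω) = 0 := by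
  funext J v
  simp only [coboundary, ← Finset.sum_sub_distrib]
  refine sum_sum_erase_eq_zero_of_symm J fun j k => ?_
  rw [Finset.erase_right_comm, add_right_comm v]
  ring

theorem coboundary_cupCoboundaries (fs : List ((ι → ℕ) → R)) :
    coboundary (cupCoboundaries fs) = 0 := by
  cases fs with
  | nil => funext J v; simp [coboundary, cupCoboundaries]
  | cons f fs => exact coboundary_coboundary _

theorem cupCoboundaries_cons (f : (ι → ℕ) → R) (fs : List ((ι → ℕ) → R)) (J : Finset ι)
    (v : ι → ℕ) :
    cupCoboundaries (f :: fs) J v =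
      ∑ j ∈ J, (f (v + Pi.single j 1) - f v) *
        cupCoboundaries fs (J.erase j) (v + Pi.single j 1) := by
  rw [cupCoboundaries, coboundary_mul, coboundary_cupCoboundaries]
  simp

theorem exists_ne_of_cupCoboundaries_ne_zero {fs : List ((ι → ℕ) → R)} {J : Finset ι} {v : ι → ℕ}
    (hv : cupCoboundaries fs J v ≠ 0) {f : (ι → ℕ) → R} (hf : f ∈ fs) :
    ∃ x ∈ Icc v (v + ∑ j ∈ J, Pi.single j 1), ∃ y ∈ Icc v (v + ∑ j ∈ J, Pi.single j 1),
      f x ≠ f y := by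
  induction fs generalizing J v with
  | nil => simp at hf
  | cons g fs ih =>
    rw [cupCoboundaries_cons] at hv
    obtain ⟨j, hj, hne⟩ := Finset.exists_ne_zero_of_sum_ne_zero hv
    have hsplit : v + ∑ k ∈ J, Pi.single k 1 =
        v + Pi.single j 1 + ∑ k ∈ J.erase j, Pi.single k 1 := by
      rw [add_assoc, Finset.add_sum_erase J (fun k => Pi.single k 1) hj]
    have hstep : v + Pi.single j 1 ≤ v + ∑ k ∈ J, Pi.single k 1 :=
      hsplit ▸ le_self_add
    rcases List.mem_cons.1 hf with rfl | hf
    · exact ⟨_, ⟨le_self_add, hstep⟩, v, ⟨le_rfl, le_self_add⟩,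
        sub_ne_zero.1 (left_ne_zero_of_mul hne)⟩
    · obtain ⟨x, hx, y, hy, hxy⟩ := ih (right_ne_zero_of_mul hne) hf
      rw [← hsplit] at hx hy
      exact ⟨x, ⟨le_self_add.trans hx.1, hx.2⟩, y, ⟨le_self_add.trans hy.1, hy.2⟩, hxy⟩

theorem cupCoboundaries_eq_zero_of_forall_eq {fs : List ((ι → ℕ) → R)} {f : (ι → ℕ) → R}
    (hf : f ∈ fs) {J : Finset ι} {i : ι} (hi : i ∉ J) {v : ι → ℕ}
    (hfi : ∀ x y : ι → ℕ, x i = v i → y i = v i → f x = f y) :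
    cupCoboundaries fs J v = 0 := by
  by_contra hne
  obtain ⟨x, hx, y, hy, hxy⟩ := exists_ne_of_cupCoboundaries_ne_zero hne hf
  have hcoord : ∀ z ∈ Icc v (v + ∑ j ∈ J, Pi.single j 1), z i = v i := fun z hz =>
    (show z i ≤ v i by simpa [Finset.sum_apply, hi] using hz.2 i).antisymm (hz.1 i)
  exact hxy (hfi x y (hcoord x hx) (hcoord y hy))

end Cup

section Box

variable {ι R : Type*} [Fintype ι] [DecidableEq ι]

/-- The lattice box of side `m` in the directions `J` through `c`: the other coordinates agree with
those of `c`. -/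
def box (m : ℕ) (J : Finset ι) (c : ι → ℕ) : Finset (ι → ℕ) :=
  Fintype.piFinset fun k => if k ∈ J then Finset.range m else {c k}

theorem apply_eq_of_mem_box_erase_update {m : ℕ} {J : Finset ι} {c v : ι → ℕ} {j : ι} {t : ℕ}
    (hv : v ∈ box m (J.erase j) (Function.update c j t)) : v j = t := by
  simpa using Fintype.mem_piFinset.1 hv j

theorem sum_box_eq_sum_slices [AddCommMonoid R] (m : ℕ) {J : Finset ι} {j : ι} (hj : j ∈ J)
    (c : ι → ℕ) (g : (ι → ℕ) → R) :
    ∑ v ∈ box m J c, g v =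
      ∑ t ∈ Finset.range m, ∑ v ∈ box m (J.erase j) (Function.update c j t), g v := by
  have hmaps : ∀ v ∈ box m J c, v j ∈ Finset.range m := fun v hv => by
    simpa [hj] using Fintype.mem_piFinset.1 hv j
  rw [← Finset.sum_fiberwise_of_maps_to hmaps]
  refine Finset.sum_congr rfl fun t ht => Finset.sum_congr ?_ fun _ _ => rfl
  ext v
  simp only [box, Finset.mem_filter, Fintype.mem_piFinset]
  grind

theorem sum_box_add_single [AddCommMonoid R] (m : ℕ) {J : Finset ι} {j : ι} (hj : j ∉ J)
    (c : ι → ℕ) (g : (ι → ℕ) → R) :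
    ∑ v ∈ box m J c, g (v + Pi.single j 1) = ∑ v ∈ box m J (c + Pi.single j 1), g v := by
  refine Finset.sum_nbij' (· + Pi.single j 1) (· - Pi.single j 1) ?_ ?_ ?_ ?_ fun _ _ => rfl
  all_goals
    intro v hv
    simp only [box, Fintype.mem_piFinset, funext_iff] at *
    intro k
    have := hv k
    by_cases hk : k = j
    · subst hk
      simp_all
    · simp_all

theorem sum_box_sub_single [AddCommGroup R] (m : ℕ) {J : Finset ι} {j : ι} (hj : j ∈ J)
    (c : ι → ℕ) (g : (ι → ℕ) → R) :
    ∑ v ∈ box m J c, (g (v + Pi.single j 1) - g v) =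
      ∑ v ∈ box m (J.erase j) (Function.update c j m), g v -
        ∑ v ∈ box m (J.erase j) (Function.update c j 0), g v := by
  have hstep (t : ℕ) : Function.update c j t + Pi.single j 1 = Function.update c j (t + 1) := by
    ext k
    by_cases hk : k = j
    · subst hk; simp
    · simp [hk]
  rw [sum_box_eq_sum_slices m hj,
    ← Finset.sum_range_sub fun t => ∑ v ∈ box m (J.erase j) (Function.update c j t), g v]
  refine Finset.sum_congr rfl fun t _ => ?_
  rw [Finset.sum_sub_distrib, sum_box_add_single m (Finset.notMem_erase j J), hstep]

theorem sum_box_coboundary [CommRing R] (m : ℕ) (J : Finset ι) (c : ι → ℕ)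
    (ω : CubicalCochain ι R) :
    ∑ v ∈ box m J c, coboundary ω J v =
      ∑ j ∈ J, (∑ v ∈ box m (J.erase j) (Function.update c j m), ω (J.erase j) v -
        ∑ v ∈ box m (J.erase j) (Function.update c j 0), ω (J.erase j) v) := by
  simp only [coboundary]
  rw [Finset.sum_comm]
  exact Finset.sum_congr rfl fun j hj => sum_box_sub_single m hj c _

theorem sum_box_cupCoboundaries_eq_one [CommRing R] [CharP R 2] {m : ℕ}
    {label : ι → (ι → ℕ) → R} (h_zero : ∀ i v, v i = 0 → label i v = 0)
    (h_one : ∀ i v, v i = m → label i v = 1) {l : List ι} (hl : l.Nodup) (c : ι → ℕ) :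
    ∑ v ∈ box m l.toFinset c, cupCoboundaries (l.map label) l.toFinset v = 1 := by
  induction l generalizing c with
  | nil => simp [box, cupCoboundaries]
  | cons i l ih =>
    obtain ⟨hil, hl⟩ := List.nodup_cons.1 hl
    have herase : (i :: l).toFinset.erase i = l.toFinset := by
      rw [List.toFinset_cons, Finset.erase_insert (by simpa using hil)]
    rw [List.map_cons, cupCoboundaries, sum_box_coboundary,
      Finset.sum_eq_single_of_mem i (by simp)]
    · rw [Finset.sum_eq_zero (s := box m _ (Function.update c i 0)) fun v hv => ?zero_face,
        Finset.sum_congr rfl fun v hv => ?one_face, sub_zero, herase]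
      · exact ih hl _
      case zero_face => rw [h_zero i v (apply_eq_of_mem_box_erase_update hv), zero_mul]
      case one_face => rw [h_one i v (apply_eq_of_mem_box_erase_update hv), one_mul, herase]
    -- On the faces of a direction `j ≠ i` the label `j` is constant, so its coboundary vanishes.
    · intro j hj hji
      have hlabel : label j ∈ l.map label :=
        List.mem_map_of_mem ((List.mem_cons.1 (List.mem_toFinset.1 hj)).resolve_left hji)
      have hvanish (t : ℕ) (ht : ∀ x y : ι → ℕ, x j = t → y j = t → label j x = label j y) :
          ∑ v ∈ box m ((i :: l).toFinset.erase j) (Function.update c j t),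
            label i v * cupCoboundaries (l.map label) ((i :: l).toFinset.erase j) v = 0 := by
        refine Finset.sum_eq_zero fun v hv => ?_
        obtain rfl := apply_eq_of_mem_box_erase_update hv
        rw [cupCoboundaries_eq_zero_of_forall_eq hlabel (Finset.notMem_erase j _) ht, mul_zero]
      rw [hvanish m fun x y hx hy => by rw [h_one j x hx, h_one j y hy],
        hvanish 0 fun x y hx hy => by rw [h_zero j x hx, h_zero j y hy], sub_zero]

end Box

theorem exists_Icc_inter_nonempty_of_cover {ι : Type*} [Finite ι] {m : ℕ} (hm : m ≠ 0)
    {A B : ι → Set (ι → ℕ)} (hA : ∀ i v, v i = 0 → v ∈ A i) (hB : ∀ i v, v i = m → v ∈ B i)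
    (hAB : ∀ i, A i ∪ B i = univ) :
    ∃ v : ι → ℕ, ∀ i, (A i ∩ Icc v (v + 1)).Nonempty ∧ (B i ∩ Icc v (v + 1)).Nonempty := by
  classical
  have := Fintype.ofFinite ι
  let label (i : ι) (v : ι → ℕ) : ZMod 2 := if v i ≠ m ∧ v ∈ A i then 0 else 1
  have h_mem_A {i v} (h : label i v = 0) : v ∈ A i := by
    by_contra hv
    simp [label, hv] at h
  have h_mem_B {i v} (h : label i v ≠ 0) : v ∈ B i := by
    by_contra hv
    have hvA : v ∈ A i := (hAB i ▸ mem_univ v : v ∈ A i ∪ B i).resolve_right hv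
    exact h (if_pos ⟨fun hvm => hv (hB i v hvm), hvA⟩)
  have hsum := sum_box_cupCoboundaries_eq_one (m := m) (label := label)
    (fun i v hv => if_pos ⟨hv ▸ hm.symm, hA i v hv⟩) (fun i v hv => if_neg fun h => h.1 hv)
    Finset.univ.nodup_toList 0
  rw [Finset.toList_toFinset] at hsum
  obtain ⟨v, -, hv⟩ := Finset.exists_ne_zero_of_sum_ne_zero (hsum ▸ one_ne_zero)
  refine ⟨v, fun i => ?_⟩
  obtain ⟨x, hx, y, hy, hxy⟩ :=
    exists_ne_of_cupCoboundaries_ne_zero hv (List.mem_map_of_mem (Finset.mem_toList.2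
      (Finset.mem_univ i)))
  have hcorner : ∑ j : ι, Pi.single j 1 = (1 : ι → ℕ) := Finset.univ_sum_single 1
  rw [hcorner] at hx hy
  by_cases hx0 : label i x = 0
  · exact ⟨⟨x, h_mem_A hx0, hx⟩, y, h_mem_B fun hy0 => hxy (hx0.trans hy0.symm), hy⟩
  · have hy0 : label i y = 0 := by
      by_contra hy0
      exact hxy ((Fin.eq_one_of_ne_zero _ hx0).trans (Fin.eq_one_of_ne_zero _ hy0).symm)
    exact ⟨⟨y, h_mem_A hy0, hy⟩, x, h_mem_B hx0, hx⟩

end CubicalCochain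

section Cube

variable {ι : Type*} {a b : ℝ}

theorem exists_closedBall_inter_nonempty_of_cover [Fintype ι] (hab : a < b)
    {A B : ι → Set (ι → Icc a b)} (hA : ∀ i, {x | (x i : ℝ) = a} ⊆ A i)
    (hB : ∀ i, {x | (x i : ℝ) = b} ⊆ B i) (hAB : ∀ i, A i ∪ B i = univ) {δ : ℝ} (hδ : 0 < δ) :
    ∃ z, ∀ i, (A i ∩ Metric.closedBall z δ).Nonempty ∧ (B i ∩ Metric.closedBall z δ).Nonempty := by
  let grid (v : ι → ℕ) : ι → Icc a b := fun k => Icc.addNSMul hab.le δ (v k)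
  obtain ⟨m, hm⟩ := Icc.addNSMul_eq_right hab.le hδ
  have hm_ne : m ≠ 0 := by
    rintro rfl
    exact hab.ne ((Icc.addNSMul_zero hab.le).symm.trans (hm 0 le_rfl))
  obtain ⟨v, hv⟩ := CubicalCochain.exists_Icc_inter_nonempty_of_cover hm_ne
    (A := fun i => grid ⁻¹' A i) (B := fun i => grid ⁻¹' B i)
    (fun i v hv => hA i (by simp [grid, hv, Icc.addNSMul_zero]))
    (fun i v hv => hB i (hm (v i) hv.ge))
    (fun i => by rw [← preimage_union, hAB i, preimage_univ])
  have hclose : ∀ x ∈ Icc v (v + 1), grid x ∈ Metric.closedBall (grid v) δ := fun x hx =>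
    (dist_pi_le_iff hδ.le).2 fun k => Icc.abs_sub_addNSMul_le hab.le hδ.le (v k)
      ⟨Icc.monotone_addNSMul hab.le hδ.le (hx.1 k), Icc.monotone_addNSMul hab.le hδ.le (hx.2 k)⟩
  refine ⟨grid v, fun i => ?_⟩
  obtain ⟨⟨x, hxA, hx⟩, y, hyB, hy⟩ := hv i
  exact ⟨⟨grid x, hxA, hclose x hx⟩, grid y, hyB, hclose y hy⟩

theorem exists_forall_mem_inter_of_closed_cover [Finite ι] (hab : a < b)
    {A B : ι → Set (ι → Icc a b)}
    (hA_closed : ∀ i, IsClosed (A i)) (hB_closed : ∀ i, IsClosed (B i))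
    (hA : ∀ i, {x | (x i : ℝ) = a} ⊆ A i) (hB : ∀ i, {x | (x i : ℝ) = b} ⊆ B i)
    (hAB : ∀ i, A i ∪ B i = univ) : ∃ z, ∀ i, z ∈ A i ∩ B i := by
  have := Fintype.ofFinite ι
  by_contra! hno
  let c : ι ⊕ ι → Set (ι → Icc a b) := Sum.elim (fun i => (A i)ᶜ) fun i => (B i)ᶜ
  have hc_open : ∀ s, IsOpen (c s) :=
    Sum.rec (fun i => (hA_closed i).isOpen_compl) fun i => (hB_closed i).isOpen_compl
  have hc_cover : univ ⊆ ⋃ s, c s := fun z _ => by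
    obtain ⟨i, hi⟩ := hno z
    rw [mem_iUnion]
    by_cases hzA : z ∈ A i
    · exact ⟨.inr i, fun hzB => hi ⟨hzA, hzB⟩⟩
    · exact ⟨.inl i, hzA⟩
  obtain ⟨δ, hδ, hball⟩ := lebesgue_number_lemma_of_metric isCompact_univ hc_open hc_cover
  obtain ⟨z, hz⟩ := exists_closedBall_inter_nonempty_of_cover hab hA hB hAB (half_pos hδ)
  have hsub : Metric.closedBall z (δ / 2) ⊆ Metric.ball z δ :=
    Metric.closedBall_subset_ball (half_lt_self hδ)
  obtain ⟨i | i, hi⟩ := hball z (mem_univ z)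
  · obtain ⟨x, hxA, hx⟩ := (hz i).1
    exact hi (hsub hx) hxA
  · obtain ⟨y, hyB, hy⟩ := (hz i).2
    exact hi (hsub hy) hyB

end Cube

theorem disjoint_closure_union_image_subtypeVal {X : Type*} [TopologicalSpace X] {A B S : Set X}
    (hS : IsClosed S) (hA : IsClosed A) (hAB : Disjoint A B) {U V : Set S} (hV : IsOpen V)
    (hUV : Disjoint U V) (hAU : (↑) ⁻¹' A ⊆ U) (hBV : (↑) ⁻¹' B ⊆ V) :
    Disjoint (closure (A ∪ (↑) '' U)) (B ∪ (↑) '' V) := by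
  have hclosure_UV : Disjoint (closure U) V := hUV.closure_left hV
  rw [closure_union, hA.closure_eq, hS.isClosedEmbedding_subtypeVal.closure_image_eq,
    disjoint_union_left, disjoint_union_right, disjoint_union_right,
    disjoint_image_iff Subtype.val_injective]
  refine ⟨⟨hAB, disjoint_right.2 ?_⟩, disjoint_left.2 ?_, hclosure_UV⟩
  · rintro _ ⟨x, hxV, rfl⟩ hxA
    exact disjoint_left.1 hUV (hAU hxA) hxV
  · rintro _ ⟨x, hxU, rfl⟩ hxB
    exact disjoint_left.1 hclosure_UV hxU (hBV hxB)

namespace IsSeparator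

variable {X Y : Type*} [TopologicalSpace X] [TopologicalSpace Y] {A B A' B' L S : Set X}

theorem preimage (h : IsSeparator A B L) {f : Y → X} (hf : Continuous f) :
    IsSeparator (f ⁻¹' A) (f ⁻¹' B) (f ⁻¹' L) := by
  obtain ⟨hL, U, V, hU, hV, hUV, hAU, hBV, hLUV⟩ := h
  refine ⟨hL.preimage hf, f ⁻¹' U, f ⁻¹' V, hU.preimage hf, hV.preimage hf, hUV.preimage f,
    preimage_mono hAU, preimage_mono hBV, ?_⟩
  rw [← preimage_compl, hLUV, preimage_union]

theorem mono (h : IsSeparator A B L) (hA : A' ⊆ A) (hB : B' ⊆ B) : IsSeparator A' B' L := by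
  obtain ⟨hL, U, V, hU, hV, hUV, hAU, hBV, hLUV⟩ := h
  exact ⟨hL, U, V, hU, hV, hUV, hA.trans hAU, hB.trans hBV, hLUV⟩

theorem exists_extension [CompletelyNormalSpace X] (hS : IsClosed S) (hA : IsClosed A)
    (hB : IsClosed B) (hAB : Disjoint A B) {L : Set S}
    (hL : IsSeparator ((↑) ⁻¹' A : Set S) ((↑) ⁻¹' B) L) :
    ∃ L', IsSeparator A B L' ∧ ((↑) ⁻¹' L' : Set S) ⊆ L := by
  obtain ⟨-, U, V, hU, hV, hUV, hAU, hBV, hLUV⟩ := hL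
  have hsep : SeparatedNhds (A ∪ (↑) '' U) (B ∪ (↑) '' V) :=
    separatedNhds_iff_disjoint.2 <| completely_normal
      (disjoint_closure_union_image_subtypeVal hS hA hAB hV hUV hAU hBV)
      (disjoint_closure_union_image_subtypeVal hS hB hAB.symm hU hUV.symm hBV hAU).symm
  obtain ⟨U', V', hU', hV', hUU', hVV', hUV'⟩ := hsep
  refine ⟨(U' ∪ V')ᶜ, ⟨(hU'.union hV').isClosed_compl, U', V', hU', hV', hUV',
    subset_union_left.trans hUU', subset_union_left.trans hVV', compl_compl _⟩, ?_⟩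
  rw [← compl_subset_compl, hLUV]
  rintro x (hx | hx)
  · exact not_not.2 (.inl (hUU' (.inr ⟨x, hx, rfl⟩)))
  · exact not_not.2 (.inr (hVV' (.inr ⟨x, hx, rfl⟩)))

end IsSeparator

theorem IsEssentialFamily.of_continuous {X Y Γ : Type*} [TopologicalSpace X] [TopologicalSpace Y]
    {A B : Γ → Set Y} (h : IsEssentialFamily A B) {f : Y → X} (hf : Continuous f)
    {A' B' : Γ → Set X} (hA : ∀ i, MapsTo f (A i) (A' i)) (hB : ∀ i, MapsTo f (B i) (B' i)) :
    IsEssentialFamily A' B' := by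
  intro L hL
  obtain ⟨y, hy⟩ := h (fun i => f ⁻¹' L i) fun i => ((hL i).preimage hf).mono (hA i) (hB i)
  exact ⟨f y, mem_iInter.2 fun i => mem_iInter.1 hy i⟩

theorem isEssentialFamily_faces_of_finite {ι : Type*} [Finite ι] {a b : ℝ} (hab : a < b) :
    IsEssentialFamily (fun i : ι => {x : ι → Icc a b | (x i : ℝ) = a})
      fun i => {x | (x i : ℝ) = b} := by
  intro L hL
  choose _ U V hU hV hUV hAU hBV hLUV using hL
  have hcover (i : ι) : (V i)ᶜ ∪ (U i)ᶜ = univ := by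
    rw [← compl_inter, (hUV i).symm.inter_eq, compl_empty]
  obtain ⟨z, hz⟩ := exists_forall_mem_inter_of_closed_cover hab
    (fun i => (hV i).isClosed_compl) (fun i => (hU i).isClosed_compl)
    (fun i => (hAU i).trans (hUV i).subset_compl_right)
    (fun i => (hBV i).trans (hUV i).subset_compl_left) hcover
  refine ⟨z, mem_iInter.2 fun i => ?_⟩
  rw [← compl_compl (L i), hLUV i, compl_union]
  exact (hz i).symm

theorem isEssentialFamily_of_forall_finset {X Γ : Type*} [TopologicalSpace X] [CompactSpace X]
    {A B : Γ → Set X}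
    (h : ∀ s : Finset Γ, IsEssentialFamily (fun i : s => A i) fun i : s => B i) :
    IsEssentialFamily A B := fun L hL =>
  CompactSpace.iInter_nonempty (fun i => (hL i).1) fun s => by
    simpa only [iInter_subtype] using h s (fun i => L i) fun i => hL i

theorem isEssentialFamily_faces {ι : Type*} {a b : ℝ} (hab : a < b) :
    IsEssentialFamily (fun i : ι => {x : ι → Icc a b | (x i : ℝ) = a})
      fun i => {x | (x i : ℝ) = b} := by
  classical
  refine isEssentialFamily_of_forall_finset fun s => ?_
  let extend (y : s → Icc a b) (i : ι) : Icc a b :=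
    if h : i ∈ s then y ⟨i, h⟩ else ⟨a, left_mem_Icc.2 hab.le⟩
  have hextend : Continuous extend := continuous_pi fun i => by
    by_cases h : i ∈ s
    · simpa only [extend, h, dite_true] using continuous_apply _
    · simpa only [extend, h, dite_false] using continuous_const
  exact (isEssentialFamily_faces_of_finite hab).of_continuous hextend
    (fun i y hy => by simpa [extend] using hy) (fun i y hy => by simpa [extend] using hy)

theorem exists_isSeparator_disjoint_iInter_of_not_stronglyInfiniteDimensional {X : Type*}
    [TopologicalSpace X] [CompletelyNormalSpace X] {S : Set X} (hS : IsClosed S)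
    (hdim : ¬ StronglyInfiniteDimensional S) {A B : ℕ → Set X} (hA : ∀ k, IsClosed (A k))
    (hB : ∀ k, IsClosed (B k)) (hAB : ∀ k, Disjoint (A k) (B k)) :
    ∃ L : ℕ → Set X, (∀ k, IsSeparator (A k) (B k) (L k)) ∧ Disjoint S (⋂ k, L k) := by
  have hness : ¬ IsEssentialFamily (fun k => ((↑) ⁻¹' A k : Set S)) fun k => (↑) ⁻¹' B k :=
    fun h => hdim ⟨_, _, fun k => ⟨(hA k).preimage continuous_subtype_val,
      (hB k).preimage continuous_subtype_val, (hAB k).preimage _⟩, h⟩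
  simp only [IsEssentialFamily, not_forall] at hness
  obtain ⟨M, hM, hM_empty⟩ := hness
  choose L hL hLM using fun k => (hM k).exists_extension hS (hA k) (hB k) (hAB k)
  refine ⟨L, hL, disjoint_left.2 fun x hxS hxL => hM_empty ⟨⟨x, hxS⟩, ?_⟩⟩
  exact mem_iInter.2 fun k => hLM k (mem_iInter.1 hxL k)

theorem exists_isSeparator_of_not_isPreconnected_compl {X : Type*} [TopologicalSpace X] {S : Set X}
    (hS : IsClosed S) (h : ¬ IsPreconnected Sᶜ) : ∃ p q, IsSeparator {p} {q} S := by
  rw [isPreconnected_iff_subset_of_disjoint] at h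
  push Not at h
  obtain ⟨U, V, hU, hV, hcover, hdisj, hnU, hnV⟩ := h
  obtain ⟨q, hqS, hqU⟩ := not_subset.1 hnU
  obtain ⟨p, hpS, hpV⟩ := not_subset.1 hnV
  refine ⟨p, q, hS, Sᶜ ∩ U, Sᶜ ∩ V, hS.isOpen_compl.inter hU, hS.isOpen_compl.inter hV, ?_,
    singleton_subset_iff.2 ⟨hpS, (hcover hpS).resolve_right hpV⟩,
    singleton_subset_iff.2 ⟨hqS, (hcover hqS).resolve_left hqU⟩, ?_⟩
  · rw [disjoint_iff_inter_eq_empty, ← inter_inter_distrib_left, hdisj]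
  · rw [← inter_union_distrib_left, inter_eq_left.2 hcover]

section Cylinder

open PiNat

variable {E : ℕ → Type*} [∀ n, TopologicalSpace (E n)]

theorem exists_cylinder_subset_of_isOpen {U : Set (∀ n, E n)} (hU : IsOpen U) {p : ∀ n, E n}
    (hp : p ∈ U) : ∃ n, cylinder p n ⊆ U := by
  obtain ⟨I, u, hu, hsub⟩ := isOpen_pi_iff.1 hU p hp
  refine ⟨I.sup id + 1, fun x hx => hsub fun j hj => ?_⟩
  rw [hx j (Nat.lt_succ_of_le (Finset.le_sup (f := id) hj))]
  exact (hu j hj).2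

theorem IsSeparator.exists_cylinder {p q : ∀ n, E n} {S : Set (∀ n, E n)}
    (h : IsSeparator {p} {q} S) : ∃ n, IsSeparator (cylinder p n) (cylinder q n) S := by
  obtain ⟨hS, U, V, hU, hV, hUV, hpU, hqV, hSUV⟩ := h
  obtain ⟨n₁, hn₁⟩ := exists_cylinder_subset_of_isOpen hU (singleton_subset_iff.1 hpU)
  obtain ⟨n₂, hn₂⟩ := exists_cylinder_subset_of_isOpen hV (singleton_subset_iff.1 hqV)
  exact ⟨max n₁ n₂, hS, U, V, hU, hV, hUV, (cylinder_anti p (le_max_left n₁ n₂)).trans hn₁,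
    (cylinder_anti q (le_max_right n₁ n₂)).trans hn₂, hSUV⟩

end Cylinder

instance : PathConnectedSpace (Icc (-1 : ℝ) 1) :=
  isPathConnected_iff_pathConnectedSpace.1 <|
    (convex_Icc (-1 : ℝ) 1).isPathConnected (nonempty_Icc.2 (by norm_num))

instance {a b : ℝ} : LocallyPathConnectedSpace (Icc a b) :=
  (convex_Icc a b).locallyPathConnectedSpace

section Tube

open PiNat

/-- The map from the cube `[-1, 1]^(Option ℕ)` to the Hilbert cube whose first `n` coordinates
follow the path `γ`, the coordinate `none` being the time, and whose `n + k`-th coordinate is the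
coordinate `some k`. It joins the cylinders of length `n` around the endpoints of `γ`. -/
noncomputable def tube {p q : HilbertCube} (γ : Path p q) (n : ℕ)
    (y : Option ℕ → Icc (-1 : ℝ) 1) : HilbertCube :=
  fun j => if j < n then γ.extend ((1 + (y none : ℝ)) / 2) j else y (some (j - n))

theorem continuous_tube {p q : HilbertCube} (γ : Path p q) (n : ℕ) : Continuous (tube γ n) :=
  continuous_pi fun j => by
    unfold tube
    split_ifs
    · have := γ.continuous_extend
      fun_prop
    · fun_prop

theorem isEssentialFamily_cylinder_faces (p q : HilbertCube) (n : ℕ) :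
    IsEssentialFamily (fun o : Option ℕ => o.elim (cylinder p n) fun k => negFace (n + k))
      fun o => o.elim (cylinder q n) fun k => posFace (n + k) := by
  obtain ⟨γ⟩ := PathConnectedSpace.joined p q
  refine (isEssentialFamily_faces (by norm_num : (-1 : ℝ) < 1)).of_continuous
    (continuous_tube γ n) ?_ ?_
  · rintro (_ | k) y hy
    · intro j hj
      rw [mem_ofPred_eq] at hy
      simp [tube, hj, hy]
    · simpa [tube, negFace] using hy
  · rintro (_ | k) y hy
    · intro j hj
      rw [mem_ofPred_eq] at hy
      simp [tube, hj, hy]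
    · simpa [tube, posFace] using hy

end Tube

theorem isClosed_negFace (i : ℕ) : IsClosed (negFace i) :=
  isClosed_eq (by fun_prop) continuous_const

theorem isClosed_posFace (i : ℕ) : IsClosed (posFace i) :=
  isClosed_eq (by fun_prop) continuous_const

theorem disjoint_negFace_posFace (i : ℕ) : Disjoint (negFace i) (posFace i) :=
  disjoint_left.2 fun x hneg hpos => by
    have h : (-1 : ℝ) = 1 := hneg.symm.trans hpos
    norm_num at h

theorem exists_isSeparator_faces_disjoint_iInter {S : Set HilbertCube} (hS : IsClosed S)
    (hdim : ¬ StronglyInfiniteDimensional S) (n : ℕ) :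
    ∃ L : ℕ → Set HilbertCube, (∀ k, IsSeparator (negFace (n + k)) (posFace (n + k)) (L k)) ∧
      Disjoint S (⋂ k, L k) :=
  exists_isSeparator_disjoint_iInter_of_not_stronglyInfiniteDimensional hS hdim
    (fun _ => isClosed_negFace _) (fun _ => isClosed_posFace _) fun _ => disjoint_negFace_posFace _

theorem nonempty_compl_of_not_stronglyInfiniteDimensional {S : Set HilbertCube} (hS : IsClosed S)
    (hdim : ¬ StronglyInfiniteDimensional S) : Sᶜ.Nonempty := by
  obtain ⟨L, hL, hSL⟩ := exists_isSeparator_faces_disjoint_iInter hS hdim 0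
  obtain ⟨z, hz⟩ := isEssentialFamily_faces (by norm_num : (-1 : ℝ) < 1) L fun k => by
    simpa only [negFace, posFace, zero_add] using hL k
  exact ⟨z, disjoint_right.1 hSL hz⟩

theorem isPreconnected_compl_of_not_stronglyInfiniteDimensional {S : Set HilbertCube}
    (hS : IsClosed S) (hdim : ¬ StronglyInfiniteDimensional S) : IsPreconnected Sᶜ := by
  by_contra hconn
  obtain ⟨p, q, hpq⟩ := exists_isSeparator_of_not_isPreconnected_compl hS hconn
  obtain ⟨n, hcyl⟩ := hpq.exists_cylinder
  obtain ⟨L, hL, hSL⟩ := exists_isSeparator_faces_disjoint_iInter hS hdim n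
  obtain ⟨z, hz⟩ := isEssentialFamily_cylinder_faces p q n (fun o => o.elim S L)
    (Option.rec hcyl hL)
  rw [mem_iInter] at hz
  exact disjoint_left.1 hSL (hz none) (mem_iInter.2 fun k => hz (some k))

/-- If `S ⊆ Q` is a compact weakly infinite dimensional subset of the
Hilbert cube, then `Q \ S` is path connected. -/
theorem isPathConnected_compl_of_compact_weaklyInfiniteDimensional
    (S : Set HilbertCube) (hcpt : IsCompact S)
    (hS : ¬ StronglyInfiniteDimensional S) :
    IsPathConnected (Sᶜ : Set HilbertCube) :=
  hcpt.isClosed.isOpen_compl.isConnected_iff_isPathConnected.1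
    ⟨nonempty_compl_of_not_stronglyInfiniteDimensional hcpt.isClosed hS,
      isPreconnected_compl_of_not_stronglyInfiniteDimensional hcpt.isClosed hS⟩
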